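/- (Fractional Liouville reduction, bilinear form identity.) Let n ≥ 1 be an integer, s ∈ (0,1), and let γ : ℝⁿ → ℝ be a smooth function with γ(x) ≥ γ₀ for some constant γ₀ > 0 and such that γ − 1 is compactly supported. Define q_γ(x) := −γ(x)^{-1/2} · (c_{n,s}/2) ∫_{ℝⁿ} (2γ^{1/2}(x) − γ^{1/2}(x+y) − γ^{1/2}(x−y)) / |y|^{n+2s} dy. Then for all smooth compactly supported u, v : ℝⁿ → ℝ, setting w := γ^{1/2} u and z := γ^{1/2} v, one has B_γ(u, v) = B_1(w, z) + ∫_{ℝⁿ} q_γ(x) w(x) z(x) dx, where B_1 is the bilinear form with γ ≡ 1. -/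

import Mathlib

open MeasureTheory
noncomputable section

/-- Euclidean space ℝⁿ. -/
abbrev RR (n : ℕ) := EuclideanSpace ℝ (Fin n)

/-- The constant c_{n,s} = 4^s Γ(n/2+s) / (π^{n/2} |Γ(-s)|). -/
def cns (n : ℕ) (s : ℝ) : ℝ :=
  (4 : ℝ) ^ s * Real.Gamma ((n : ℝ) / 2 + s) / (Real.pi ^ ((n : ℝ) / 2) * |Real.Gamma (-s)|)

/-- The fractional conductivity bilinear form
B_γ(u,v) = (c_{n,s}/2) ∬ γ^{1/2}(x) γ^{1/2}(y) (u(x)-u(y))(v(x)-v(y)) / |x-y|^{n+2s} dx dy. -/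
def Bform (n : ℕ) (s : ℝ) (γ u v : RR n → ℝ) : ℝ :=
  (cns n s / 2) * ∫ p : RR n × RR n,
    Real.sqrt (γ p.1) * Real.sqrt (γ p.2) * (u p.1 - u p.2) * (v p.1 - v p.2) /
      ‖p.1 - p.2‖ ^ ((n : ℝ) + 2 * s)

/-- The Liouville potential q_γ = -γ^{-1/2} (-Δ)^s γ^{1/2}, with the fractional Laplacian
given by the symmetrized singular integral. -/
def liouvillePot (n : ℕ) (s : ℝ) (γ : RR n → ℝ) (x : RR n) : ℝ :=
  -(Real.sqrt (γ x))⁻¹ * ((cns n s / 2) * ∫ y : RR n,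
    (2 * Real.sqrt (γ x) - Real.sqrt (γ (x + y)) - Real.sqrt (γ (x - y))) /
      ‖y‖ ^ ((n : ℝ) + 2 * s))

/-- The dominating radial kernel. -/
def kerK (n : ℕ) (s : ℝ) (y : RR n) : ℝ := min 1 (‖y‖ ^ 2) / ‖y‖ ^ ((n : ℝ) + 2 * s)

lemma kerK_nonneg (n : ℕ) (s : ℝ) (y : RR n) : 0 ≤ kerK n s y := by
  unfold kerK; positivity

lemma kerK_integrable (n : ℕ) (hn : 1 ≤ n) (s : ℝ) (hs : s ∈ Set.Ioo (0 : ℝ) 1) :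
    Integrable (kerK n s) := by
  obtain ⟨hs0, hs1⟩ := hs
  have : Nonempty (Fin n) := ⟨⟨0, hn⟩⟩
  have : Nontrivial (RR n) := inferInstance
  have key := (integrable_fun_norm_addHaar (E := RR n) (volume : Measure (RR n))
    (f := fun r : ℝ => min 1 (r ^ 2) / r ^ ((n : ℝ) + 2 * s))).2
  refine key ?_
  have hfr : Module.finrank ℝ (RR n) = n := by simp
  rw [hfr]
  rw [← Set.Ioc_union_Ioi_eq_Ioi (zero_le_one (α := ℝ))]
  have hpow : ∀ r : ℝ, 0 < r → r ^ (n - 1) / r ^ ((n : ℝ) + 2 * s) = r ^ (-1 - 2 * s) := by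
    intro r hr
    rw [← Real.rpow_natCast, ← Real.rpow_sub hr, Nat.cast_sub hn]
    congr 1; push_cast; ring
  refine IntegrableOn.union ?_ ?_
  · have h1 : IntegrableOn (fun r : ℝ => r ^ (1 - 2 * s)) (Set.Ioc 0 1) := by
      rw [← intervalIntegrable_iff_integrableOn_Ioc_of_le zero_le_one]
      exact intervalIntegral.intervalIntegrable_rpow' (by linarith)
    refine h1.congr_fun ?_ measurableSet_Ioc
    intro r hr
    have hr0 : 0 < r := hr.1
    have hm : min 1 (r ^ 2) = r ^ 2 := min_eq_right (pow_le_one₀ hr0.le hr.2)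
    simp only [smul_eq_mul, hm]
    have : r ^ (n - 1) * (r ^ 2 / r ^ ((n : ℝ) + 2 * s)) = r ^ 2 * (r ^ (-1 - 2 * s)) := by
      rw [← hpow r hr0]; ring
    rw [this, ← Real.rpow_natCast r 2, ← Real.rpow_add hr0]
    congr 1; push_cast; ring
  · have h1 : IntegrableOn (fun r : ℝ => r ^ (-1 - 2 * s)) (Set.Ioi 1) :=
      integrableOn_Ioi_rpow_of_lt (by linarith) one_pos
    refine h1.congr_fun ?_ measurableSet_Ioi
    intro r hr
    have hr1 : 1 < r := hr
    have hr0 : 0 < r := by linarith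
    have hm : min 1 (r ^ 2) = 1 := min_eq_left (one_le_pow₀ hr1.le)
    simp only [smul_eq_mul, hm]
    rw [← hpow r hr0]; ring

lemma min_lip {n : ℕ} (f : RR n → ℝ) (hf : ContDiff ℝ (⊤ : ℕ∞) f) (hc : HasCompactSupport f) :
    ∃ C : ℝ, 0 ≤ C ∧ ∀ x y, |f x - f y| ≤ C * min 1 ‖x - y‖ := by
  obtain ⟨M, hM⟩ := hc.exists_bound_of_continuous hf.continuous
  obtain ⟨L, hL⟩ := ContDiff.lipschitzWith_of_hasCompactSupport hc hf (by simp)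
  have hM0 : 0 ≤ M := (norm_nonneg _).trans (hM 0)
  refine ⟨2 * M + L, by positivity, fun x y => ?_⟩
  have h1 : |f x - f y| ≤ 2 * M := by
    have h2 := hM x
    have h3 := hM y
    rw [Real.norm_eq_abs] at h2 h3
    calc |f x - f y| ≤ |f x| + |f y| := abs_sub _ _
      _ ≤ 2 * M := by linarith
  have h2 : |f x - f y| ≤ L * ‖x - y‖ := by
    simpa [Real.dist_eq, dist_eq_norm] using hL.dist_le_mul x y
  have hL0 : (0 : ℝ) ≤ L := L.2
  rcases le_total 1 ‖x - y‖ with h | h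
  · rw [min_eq_left h]; linarith
  · rw [min_eq_right h]
    nlinarith [norm_nonneg (x - y)]

lemma second_diff {n : ℕ} (f : RR n → ℝ) (hf : ContDiff ℝ (⊤ : ℕ∞) f)
    (hc : HasCompactSupport f) :
    ∃ C : ℝ, 0 ≤ C ∧ ∀ x y, |2 * f x - f (x + y) - f (x - y)| ≤ C * min 1 (‖y‖ ^ 2) := by
  obtain ⟨M, hM⟩ := hc.exists_bound_of_continuous hf.continuous
  have hf' : ContDiff ℝ 1 (fderiv ℝ f) := hf.fderiv_right (by norm_cast)
  obtain ⟨L, hL⟩ := ContDiff.lipschitzWith_of_hasCompactSupport (hc.fderiv ℝ) hf' (by simp)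
  have hM0 : 0 ≤ M := (norm_nonneg _).trans (hM 0)
  have hL0 : (0 : ℝ) ≤ L := L.2
  refine ⟨4 * M + 2 * L, by positivity, fun x y => ?_⟩
  have h1 : |2 * f x - f (x + y) - f (x - y)| ≤ 4 * M := by
    have h2 := hM x
    have h3 := hM (x + y)
    have h4 := hM (x - y)
    rw [Real.norm_eq_abs, abs_le] at h2 h3 h4
    rw [abs_le]
    constructor <;> linarith
  have h2 : |2 * f x - f (x + y) - f (x - y)| ≤ (2 * L) * ‖y‖ ^ 2 := by
    have hd : Differentiable ℝ f := hf.differentiable (by simp)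
    have hder : ∀ z ∈ Metric.closedBall (0 : RR n) ‖y‖,
        HasFDerivWithinAt (fun z => f (x + z) + f (x - z))
          (fderiv ℝ f (x + z) - fderiv ℝ f (x - z)) (Metric.closedBall (0 : RR n) ‖y‖) z := by
      intro z _
      have a1 : HasFDerivAt (fun z => f (x + z)) (fderiv ℝ f (x + z)) z := by
        have := (hd (x + z)).hasFDerivAt.comp z ((hasFDerivAt_id z).const_add x)
        simp only [ContinuousLinearMap.comp_id] at this
        exact this
      have a2 : HasFDerivAt (fun z => f (x - z)) (-fderiv ℝ f (x - z)) z := by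
        have := (hd (x - z)).hasFDerivAt.comp z ((hasFDerivAt_id z).const_sub x)
        simp only [ContinuousLinearMap.comp_neg, ContinuousLinearMap.comp_id] at this
        exact this
      have := (a1.add a2).hasFDerivWithinAt (s := Metric.closedBall (0 : RR n) ‖y‖)
      rw [sub_eq_add_neg]
      exact this
    have hb : ∀ z ∈ Metric.closedBall (0 : RR n) ‖y‖,
        ‖fderiv ℝ f (x + z) - fderiv ℝ f (x - z)‖ ≤ 2 * L * ‖y‖ := by
      intro z hz
      have hz' : ‖z‖ ≤ ‖y‖ := by simpa using hz
      have := hL.dist_le_mul (x + z) (x - z)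
      rw [dist_eq_norm, dist_eq_norm] at this
      have e : x + z - (x - z) = (2 : ℝ) • z := by rw [two_smul]; abel
      rw [e, norm_smul] at this
      simp at this
      nlinarith
    have := (convex_closedBall (0 : RR n) ‖y‖).norm_image_sub_le_of_norm_hasFDerivWithin_le
      hder hb (x := 0) (y := y) (by simp) (by simp)
    simp only [add_zero, sub_zero, Real.norm_eq_abs] at this
    rw [← abs_neg]
    calc _ = |f (x + y) + f (x - y) - (f x + f x)| := by congr 1; ring
      _ ≤ _ := this
      _ = _ := by ring
  rcases le_total 1 (‖y‖ ^ 2) with h | h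
  · rw [min_eq_left h]; linarith
  · rw [min_eq_right h]
    nlinarith [sq_nonneg ‖y‖]

lemma shifted_integrable (n : ℕ) (hn : 1 ≤ n) (s : ℝ) (hs : s ∈ Set.Ioo (0 : ℝ) 1)
    (g h : RR n → ℝ) (hg : Continuous g) (hh : Continuous h) (hc : HasCompactSupport h)
    (A : ℝ) (hA0 : 0 ≤ A) (hA : ∀ x y, |g x - g y| ≤ A * min 1 ‖x - y‖)
    (B : ℝ) (hB0 : 0 ≤ B) (hB : ∀ x y, |h x - h y| ≤ B * min 1 ‖x - y‖) :
    Integrable (fun p : RR n × RR n => (g p.1 - g (p.1 + p.2)) * (h p.1 - h (p.1 + p.2)) /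
      ‖p.2‖ ^ ((n : ℝ) + 2 * s)) (volume.prod volume) := by
  set χ : RR n → ℝ := (tsupport h).indicator (fun _ => 1) with hχ
  have hχ0 : ∀ x, 0 ≤ χ x := fun x => Set.indicator_nonneg (fun _ _ => zero_le_one) x
  have hχi : Integrable χ := by
    rw [hχ, integrable_indicator_iff (isClosed_tsupport h).measurableSet]
    exact integrableOn_const hc.isCompact.measure_lt_top.ne
  have hk := kerK_integrable n hn s hs
  have i1 : Integrable (fun p : RR n × RR n => χ p.1 * kerK n s p.2) (volume.prod volume) :=
    hχi.mul_prod hk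
  have mp : MeasurePreserving (fun z : RR n × RR n => (z.1 + z.2, z.2))
      (volume.prod volume) (volume.prod volume) := measurePreserving_add_prod volume volume
  have i2 : Integrable (fun p : RR n × RR n => χ (p.1 + p.2) * kerK n s p.2)
      (volume.prod volume) := mp.integrable_comp_of_integrable i1
  have i3 := (i1.add i2).const_mul (A * B)
  refine i3.mono' ?_ (Filter.Eventually.of_forall fun p => ?_)
  · have m1 : Measurable (fun p : RR n × RR n =>
        (g p.1 - g (p.1 + p.2)) * (h p.1 - h (p.1 + p.2))) := by
      apply Continuous.measurable; fun_prop
    have m2 : Measurable (fun p : RR n × RR n => ‖p.2‖ ^ ((n : ℝ) + 2 * s)) := by fun_prop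
    exact (m1.div m2).aestronglyMeasurable
  · obtain ⟨x, y⟩ := p
    simp only [Pi.add_apply]
    have e : ‖x - (x + y)‖ = ‖y‖ := by simp
    have b1 := hA x (x + y)
    have b2 := hB x (x + y)
    rw [e] at b1 b2
    have hm : 0 ≤ min 1 ‖y‖ := by positivity
    have b3 : |h x - h (x + y)| ≤ B * min 1 ‖y‖ * (χ x + χ (x + y)) := by
      by_cases c1 : x ∈ tsupport h
      · have : χ x = 1 := by simp [hχ, c1]
        rw [this]
        have := hχ0 (x + y)
        nlinarith [mul_nonneg hB0 hm]
      · by_cases c2 : x + y ∈ tsupport h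
        · have : χ (x + y) = 1 := by simp [hχ, c2]
          rw [this]
          have := hχ0 x
          nlinarith [mul_nonneg hB0 hm]
        · rw [image_eq_zero_of_notMem_tsupport c1, image_eq_zero_of_notMem_tsupport c2]
          have := hχ0 x
          have := hχ0 (x + y)
          simp only [sub_zero, abs_zero]
          positivity
    have hsq : min 1 ‖y‖ * min 1 ‖y‖ = min 1 (‖y‖ ^ 2) := by
      rcases le_total 1 ‖y‖ with t | t
      · rw [min_eq_left t, min_eq_left (one_le_pow₀ t)]; ring
      · rw [min_eq_right t, min_eq_right (pow_le_one₀ (norm_nonneg _) t)]; ring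
    have hden : 0 ≤ ‖y‖ ^ ((n : ℝ) + 2 * s) := by positivity
    rw [Real.norm_eq_abs, abs_div, abs_mul, abs_of_nonneg hden]
    have : A * B * (χ x * kerK n s y + χ (x + y) * kerK n s y)
        = (A * min 1 ‖y‖) * (B * min 1 ‖y‖ * (χ x + χ (x + y))) /
          ‖y‖ ^ ((n : ℝ) + 2 * s) := by
      unfold kerK; rw [← hsq]; ring
    rw [this]
    gcongr

lemma diff_integrable_iff (n : ℕ) (s : ℝ) (g h : RR n → ℝ) :
    Integrable (fun p : RR n × RR n => (g p.1 - g p.2) * (h p.1 - h p.2) /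
      ‖p.1 - p.2‖ ^ ((n : ℝ) + 2 * s)) ↔
    Integrable (fun p : RR n × RR n => (g p.1 - g (p.1 + p.2)) * (h p.1 - h (p.1 + p.2)) /
      ‖p.2‖ ^ ((n : ℝ) + 2 * s)) (volume.prod volume) := by
  have mp : MeasurePreserving (MeasurableEquiv.shearAddRight (RR n))
      (volume.prod volume) (volume.prod volume) := measurePreserving_prod_add volume volume
  rw [Measure.volume_eq_prod, ← mp.integrable_comp_emb (MeasurableEquiv.measurableEmbedding _)]
  apply iff_of_eq
  congr 1
  funext p
  simp [MeasurableEquiv.shearAddRight]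

lemma diff_integral_eq (n : ℕ) (s : ℝ) (g h : RR n → ℝ) :
    ∫ p : RR n × RR n, (g p.1 - g p.2) * (h p.1 - h p.2) /
      ‖p.1 - p.2‖ ^ ((n : ℝ) + 2 * s) =
    ∫ p : RR n × RR n, (g p.1 - g (p.1 + p.2)) * (h p.1 - h (p.1 + p.2)) /
      ‖p.2‖ ^ ((n : ℝ) + 2 * s) ∂(volume.prod volume) := by
  have mp : MeasurePreserving (MeasurableEquiv.shearAddRight (RR n))
      (volume.prod volume) (volume.prod volume) := measurePreserving_prod_add volume volume
  rw [Measure.volume_eq_prod, ← mp.integral_comp (MeasurableEquiv.measurableEmbedding _)]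
  congr 1
  funext p
  simp [MeasurableEquiv.shearAddRight]

lemma diff_integral (n : ℕ) (hn : 1 ≤ n) (s : ℝ) (hs : s ∈ Set.Ioo (0 : ℝ) 1)
    (g h : RR n → ℝ) (hg : Continuous g) (hh : Continuous h) (hc : HasCompactSupport h)
    (A : ℝ) (hA0 : 0 ≤ A) (hA : ∀ x y, |g x - g y| ≤ A * min 1 ‖x - y‖)
    (B : ℝ) (hB0 : 0 ≤ B) (hB : ∀ x y, |h x - h y| ≤ B * min 1 ‖x - y‖)
    (C : ℝ) (hC0 : 0 ≤ C)
    (hC : ∀ x y, |2 * g x - g (x + y) - g (x - y)| ≤ C * min 1 (‖y‖ ^ 2)) :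
    ∫ p : RR n × RR n, (g p.1 - g p.2) * (h p.1 - h p.2) /
      ‖p.1 - p.2‖ ^ ((n : ℝ) + 2 * s) =
    ∫ x : RR n, h x * ∫ y : RR n, (2 * g x - g (x + y) - g (x - y)) /
      ‖y‖ ^ ((n : ℝ) + 2 * s) := by
  have hI := shifted_integrable n hn s hs g h hg hh hc A hA0 hA B hB0 hB
  rw [diff_integral_eq, integral_prod_symm _ hI]
  have hhi : Integrable h := hh.integrable_of_hasCompactSupport hc
  have hJ : Integrable (fun p : RR n × RR n =>
      h p.1 * ((2 * g p.1 - g (p.1 + p.2) - g (p.1 - p.2)) / ‖p.2‖ ^ ((n : ℝ) + 2 * s)))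
      (volume.prod volume) := by
    have i1 := (hhi.norm.mul_prod (kerK_integrable n hn s hs)).const_mul C
    refine i1.mono' ?_ (Filter.Eventually.of_forall fun p => ?_)
    · have m0 : Measurable (fun p : RR n × RR n => h p.1) := by
        apply Continuous.measurable; fun_prop
      have m1 : Measurable (fun p : RR n × RR n =>
          2 * g p.1 - g (p.1 + p.2) - g (p.1 - p.2)) := by
        apply Continuous.measurable; fun_prop
      have m2 : Measurable (fun p : RR n × RR n => ‖p.2‖ ^ ((n : ℝ) + 2 * s)) := by fun_prop
      exact (m0.mul (m1.div m2)).aestronglyMeasurable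
    · obtain ⟨x, y⟩ := p
      have hden : 0 ≤ ‖y‖ ^ ((n : ℝ) + 2 * s) := by positivity
      have b := hC x y
      simp only [Real.norm_eq_abs, abs_mul, abs_div, abs_of_nonneg hden]
      have : C * (|h x| * kerK n s y)
          = |h x| * (C * min 1 (‖y‖ ^ 2) / ‖y‖ ^ ((n : ℝ) + 2 * s)) := by
        unfold kerK; ring
      rw [this]
      gcongr
  have hswap := integral_integral_swap (f := fun x y : RR n =>
    h x * ((2 * g x - g (x + y) - g (x - y)) / ‖y‖ ^ ((n : ℝ) + 2 * s)))
    (μ := volume) (ν := volume) hJ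
  simp_rw [integral_const_mul] at hswap
  rw [hswap]
  congr 1
  funext y
  have j1 : Integrable (fun x => (g x - g (x + y)) * h x) :=
    (Continuous.integrable_of_hasCompactSupport (by fun_prop) hc.mul_left)
  have j2 : Integrable (fun x => (g (x - y) - g x) * h x) :=
    (Continuous.integrable_of_hasCompactSupport (by fun_prop) hc.mul_left)
  have j2' : Integrable (fun x => (g x - g (x + y)) * h (x + y)) := by
    simpa using j2.comp_add_right y
  have e2 : ∫ x, (g x - g (x + y)) * h (x + y) = ∫ x, (g (x - y) - g x) * h x := by
    rw [← integral_add_right_eq_self (fun x => (g (x - y) - g x) * h x) y]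
    simp
  have l : ∫ x, (g x - g (x + y)) * (h x - h (x + y))
      = ∫ x, h x * (2 * g x - g (x + y) - g (x - y)) := by
    simp_rw [mul_sub (_ - _) (h _)]
    rw [integral_sub j1 j2', e2, ← integral_sub j1 j2]
    congr 1
    funext x
    ring
  simp only [← mul_div_assoc]
  rw [integral_div, integral_div, l]

/-- Fractional Liouville reduction, bilinear form identity:
B_γ(u,v) = B_1(γ^{1/2}u, γ^{1/2}v) + ∫ q_γ (γ^{1/2}u)(γ^{1/2}v). -/
theorem fractional_liouville_reduction_bilinear
    (n : ℕ) (hn : 1 ≤ n) (s : ℝ) (hs : s ∈ Set.Ioo (0 : ℝ) 1)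
    (γ : RR n → ℝ) (hγ : ContDiff ℝ (⊤ : ℕ∞) γ)
    (γ₀ : ℝ) (hγ₀ : 0 < γ₀) (hlb : ∀ x, γ₀ ≤ γ x)
    (hsupp : HasCompactSupport (fun x => γ x - 1))
    (u v : RR n → ℝ)
    (hu : ContDiff ℝ (⊤ : ℕ∞) u) (hcu : HasCompactSupport u)
    (hv : ContDiff ℝ (⊤ : ℕ∞) v) (hcv : HasCompactSupport v) :
    Bform n s γ u v
      = Bform n s (fun _ => 1) (fun x => Real.sqrt (γ x) * u x) (fun x => Real.sqrt (γ x) * v x)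
        + ∫ x : RR n,
            liouvillePot n s γ x * (Real.sqrt (γ x) * u x) * (Real.sqrt (γ x) * v x) := by
  set g : RR n → ℝ := fun x => Real.sqrt (γ x) with hgdef
  have hpos : ∀ x, 0 < γ x := fun x => hγ₀.trans_le (hlb x)
  have hgpos : ∀ x, 0 < g x := fun x => Real.sqrt_pos.2 (hpos x)
  have hg : ContDiff ℝ (⊤ : ℕ∞) g := hγ.sqrt fun x => (hpos x).ne'
  have hg1 : ContDiff ℝ (⊤ : ℕ∞) (fun x => g x - 1) := hg.sub contDiff_const
  have hg1c : HasCompactSupport (fun x => g x - 1) := by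
    refine hsupp.mono ?_
    intro x hx hx'
    apply hx
    have : γ x = 1 := by linarith
    simp [hgdef, this]
  obtain ⟨A, hA0, hA⟩ := min_lip _ hg1 hg1c
  obtain ⟨C, hC0, hC⟩ := second_diff _ hg1 hg1c
  have hA' : ∀ x y, |g x - g y| ≤ A * min 1 ‖x - y‖ := by
    intro x y; have := hA x y; simpa using this
  have hC' : ∀ x y, |2 * g x - g (x + y) - g (x - y)| ≤ C * min 1 (‖y‖ ^ 2) := by
    intro x y
    have := hC x y
    convert this using 2
    ring
  have hw : ContDiff ℝ (⊤ : ℕ∞) (fun x => g x * u x) := hg.mul hu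
  have hz : ContDiff ℝ (⊤ : ℕ∞) (fun x => g x * v x) := hg.mul hv
  have hwc : HasCompactSupport (fun x => g x * u x) := hcu.mul_left
  have hzc : HasCompactSupport (fun x => g x * v x) := hcv.mul_left
  have hh : ContDiff ℝ (⊤ : ℕ∞) (fun x => g x * u x * v x) := hw.mul hv
  have hhc : HasCompactSupport (fun x => g x * u x * v x) := hcv.mul_left
  obtain ⟨Bw, hBw0, hBw⟩ := min_lip _ hw hwc
  obtain ⟨Bz, hBz0, hBz⟩ := min_lip _ hz hzc
  obtain ⟨Bh, hBh0, hBh⟩ := min_lip _ hh hhc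
  have I1 := (diff_integrable_iff n s (fun x => g x * u x) (fun x => g x * v x)).2
    (shifted_integrable n hn s hs _ _ hw.continuous hz.continuous hzc Bw hBw0 hBw Bz hBz0 hBz)
  have I2 := (diff_integrable_iff n s g (fun x => g x * u x * v x)).2
    (shifted_integrable n hn s hs _ _ hg.continuous hh.continuous hhc A hA0 hA' Bh hBh0 hBh)
  have E2 := diff_integral n hn s hs g (fun x => g x * u x * v x) hg.continuous hh.continuous hhc
    A hA0 hA' Bh hBh0 hBh C hC0 hC'
  have E1 : (∫ p : RR n × RR n,
      g p.1 * g p.2 * (u p.1 - u p.2) * (v p.1 - v p.2) / ‖p.1 - p.2‖ ^ ((n : ℝ) + 2 * s))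
      = (∫ p : RR n × RR n, (g p.1 * u p.1 - g p.2 * u p.2) * (g p.1 * v p.1 - g p.2 * v p.2) /
          ‖p.1 - p.2‖ ^ ((n : ℝ) + 2 * s))
        - ∫ p : RR n × RR n, (g p.1 - g p.2) * (g p.1 * u p.1 * v p.1 - g p.2 * u p.2 * v p.2) /
          ‖p.1 - p.2‖ ^ ((n : ℝ) + 2 * s) := by
    rw [← integral_sub I1 I2]
    congr 1
    funext p
    ring
  have E3 : (∫ x : RR n, liouvillePot n s γ x * (g x * u x) * (g x * v x))
      = -(cns n s / 2) * ∫ x : RR n, (g x * u x * v x) * ∫ y : RR n,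
        (2 * g x - g (x + y) - g (x - y)) / ‖y‖ ^ ((n : ℝ) + 2 * s) := by
    rw [← integral_const_mul]
    congr 1
    funext x
    have hx := (hgpos x).ne'
    have : liouvillePot n s γ x = -(g x)⁻¹ * ((cns n s / 2) * ∫ y : RR n,
        (2 * g x - g (x + y) - g (x - y)) / ‖y‖ ^ ((n : ℝ) + 2 * s)) := rfl
    rw [this]
    field_simp
  have E4 : Bform n s (fun _ => 1) (fun x => g x * u x) (fun x => g x * v x)
      = (cns n s / 2) * ∫ p : RR n × RR n,
        (g p.1 * u p.1 - g p.2 * u p.2) * (g p.1 * v p.1 - g p.2 * v p.2) /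
          ‖p.1 - p.2‖ ^ ((n : ℝ) + 2 * s) := by
    simp [Bform]
  have E5 : Bform n s γ u v = (cns n s / 2) * ∫ p : RR n × RR n,
      g p.1 * g p.2 * (u p.1 - u p.2) * (v p.1 - v p.2) /
        ‖p.1 - p.2‖ ^ ((n : ℝ) + 2 * s) := rfl
  rw [E5, E1, E2]
  refine Eq.trans ?_ (congrArg₂ (· + ·) E4 E3).symm
  ring
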